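/- Let U be a consistent c.e. theory and 𝒳 a set of sentences. Then U is effectively 𝒳-inseparable if and only if U is effectively ⋐-essentially 𝒳-m-incomplete, i.e. there is a partial computable function Ψ such that for every j, if U ⋐ W_j and W_j is mono-consistent, then Ψ(j) converges, Ψ(j) ∈ 𝒳, and Ψ(j) ∉ W_{j,m} ∪ W_{j,n}. -/

import Mathlib

open FirstOrder FirstOrder.Language

namespace PourEl

/-! ## Recursion-theoretic notions -/

/-- The `i`-th computably enumerable subset of `ℕ` (the domain of the `i`-th
partial computable function). -/
def WSet (i : ℕ) : Set ℕ :=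
  {n | ((Denumerable.ofNat Nat.Partrec.Code i).eval n).Dom}

/-- A set of natural numbers is computably enumerable. -/
def CE (A : Set ℕ) : Prop := ∃ i, A = WSet i

/-- A set of natural numbers is computable. -/
def Comp (A : Set ℕ) : Prop := ComputablePred (· ∈ A)

/-- Disjoint sets `X`, `Y` are computably separable iff some computable set
contains `X` and is disjoint from `Y`. -/
def CompSeparable (X Y : Set ℕ) : Prop :=
  ∃ Z : Set ℕ, Comp Z ∧ X ⊆ Z ∧ Y ∩ Z = ∅

/-- Computable inseparability. -/
def CompInseparable (X Y : Set ℕ) : Prop := ¬ CompSeparable X Y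

/-- `Z` and `W` weakly biseparate `X` and `Y`. -/
def WeaklyBiseparate {α : Type*} (Z W X Y : Set α) : Prop :=
  X ⊆ Z ∧ Y ⊆ W ∧ Z ∩ Y = ∅ ∧ W ∩ X = ∅

/-- `Z` and `W` biseparate `X` and `Y`. -/
def Biseparate {α : Type*} (Z W X Y : Set α) : Prop :=
  WeaklyBiseparate Z W X Y ∧ Z ∩ W = ∅

/-! ## Logical notions -/

variable {L : FirstOrder.Language}

/-- Provability: `φ` is a first-order consequence of `U` (by Gödel completeness,
semantic consequence). -/
def Prv (U : L.Theory) (φ : L.Sentence) : Prop := U ⊨ᵇ φ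

/-- `U_p`: the set of theorems of `U`. -/
def Thms (U : L.Theory) : Set L.Sentence := {φ | Prv U φ}

/-- `U_r`: the set of refutable sentences of `U`. -/
def Refut (U : L.Theory) : Set L.Sentence := {φ | Prv U ∼φ}

/-- Consistency: `U ⊬ ⊥`. -/
def Consistent (U : L.Theory) : Prop := ¬ Prv U ⊥

/-- `φ` is independent of `U`: `U` proves neither `φ` nor `¬φ`. -/
def Independent (U : L.Theory) (φ : L.Sentence) : Prop := ¬ Prv U φ ∧ ¬ Prv U ∼φ

/-- `U` is incomplete: some sentence is independent of it. -/
def Incomplete (U : L.Theory) : Prop := ∃ φ, Independent U φ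

/-- Mono-consequence: `U ⊢_m φ` iff `ψ ⊢ φ` for some `ψ ∈ U`. -/
def MPrv (U : L.Theory) (φ : L.Sentence) : Prop := ∃ ψ ∈ U, Prv {ψ} φ

/-- `U_m`: the set of mono-theorems of `U`. -/
def MThms (U : L.Theory) : Set L.Sentence := {φ | MPrv U φ}

/-- `U_n`: the set of mono-refutable sentences of `U`. -/
def MRefut (U : L.Theory) : Set L.Sentence := {φ | MPrv U ∼φ}

/-- Mono-consistency: every member is consistent by itself. -/
def MonoConsistent (U : L.Theory) : Prop := ∀ ψ ∈ U, Consistent ({ψ} : L.Theory)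

/-- `Û`: the set of all non-empty finite conjunctions of elements of `U`. -/
def hat (U : L.Theory) : L.Theory :=
  {φ | ∃ (ψ : L.Sentence) (l : List L.Sentence),
    ψ ∈ U ∧ (∀ χ ∈ l, χ ∈ U) ∧ φ = l.foldl (· ⊓ ·) ψ}

/-- `U ⋓ V`. -/
def Cup (U V : L.Theory) : L.Theory :=
  {χ | ∃ φ ∈ U, ∃ ψ ∈ V, χ = φ ⊓ ψ}

/-- `U ⋐ V`: for every `φ ∈ U` and `ψ ∈ V` there is `ρ ∈ V` with `ρ ⊢ φ ∧ ψ`. -/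
def Ssub (U V : L.Theory) : Prop :=
  ∀ φ ∈ U, ∀ ψ ∈ V, ∃ ρ ∈ V, Prv {ρ} (φ ⊓ ψ)

/-! ## Gödel numbering -/

/-- A Gödel numbering of the sentences of a (countable) signature: a bijective
coding of sentences by natural numbers that is effective for the basic syntactic
operations, and for which the theorems of a c.e. theory can be effectively
enumerated from an index of the theory. -/
structure Numbering (L : FirstOrder.Language) where
  equiv : L.Sentence ≃ ℕ
  neg_comp : Computable fun n => equiv ∼(equiv.symm n)
  inf_comp : Computable₂ fun m n => equiv (equiv.symm m ⊓ equiv.symm n)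
  imp_comp : Computable₂ fun m n => equiv (equiv.symm m ⟹ equiv.symm n)
  iff_comp : Computable₂ fun m n => equiv (equiv.symm m ⇔ equiv.symm n)
  thmIdx : ℕ → ℕ
  thmIdx_comp : Computable thmIdx
  thmIdx_spec : ∀ i, WSet (thmIdx i) = equiv '' Thms (equiv.symm '' WSet i)

namespace Numbering

variable (g : Numbering L)

/-- The code of a sentence. -/
def code (φ : L.Sentence) : ℕ := g.equiv φ

/-- The set of codes of a set of sentences. -/
def codes (S : Set L.Sentence) : Set ℕ := g.equiv '' S

/-- The theory axiomatised by the `i`-th c.e. set (identified with a set of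
sentences via the numbering). -/
def thy (i : ℕ) : L.Theory := g.equiv.symm '' WSet i

/-- The theory `U` is computably enumerable (with respect to the numbering). -/
def CEThy (U : L.Theory) : Prop := CE (g.codes U)

end Numbering



/-- `U` is effectively `X`-inseparable: a partial computable function uniformly
produces, from any pair of c.e. sets weakly biseparating `U_p` and `U_r`, a
sentence in `X` lying outside both. -/
def EffXInseparable (g : Numbering L) (U : L.Theory) (X : Set L.Sentence) : Prop :=
  ∃ Φ : ℕ → ℕ →. ℕ, Partrec₂ Φ ∧ ∀ i j,
    WeaklyBiseparate (WSet i) (WSet j) (g.codes (Thms U)) (g.codes (Refut U)) →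
    ∃ n ∈ Φ i j, n ∈ g.codes X ∧ n ∉ WSet i ∪ WSet j

/-! ## Semidecidable predicates -/

/-- `p` is the projection of a computable relation. -/
def SD {α : Type*} [Primcodable α] (p : α → Prop) : Prop :=
  ∃ h : α → ℕ → Bool, Computable₂ h ∧ ∀ a, p a ↔ ∃ k, h a k = true

theorem SD.comp {α β : Type*} [Primcodable α] [Primcodable β] {p : β → Prop} (hp : SD p)
    {f : α → β} (hf : Computable f) : SD fun a => p (f a) := by
  obtain ⟨h, hc, hs⟩ := hp
  exact ⟨fun a k => h (f a) k, hc.comp (hf.comp Computable.fst) Computable.snd, fun a => hs (f a)⟩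

theorem SD.or {α : Type*} [Primcodable α] {p q : α → Prop} (hp : SD p) (hq : SD q) :
    SD fun a => p a ∨ q a := by
  obtain ⟨h, hc, hs⟩ := hp
  obtain ⟨h', hc', hs'⟩ := hq
  refine ⟨fun a k => h a k || h' a k, Primrec.or.to_comp.comp hc hc', fun a => ?_⟩
  simp [hs, hs', exists_or]

theorem SD.and {α : Type*} [Primcodable α] {p q : α → Prop} (hp : SD p) (hq : SD q) :
    SD fun a => p a ∧ q a := by
  obtain ⟨h, hc, hs⟩ := hp
  obtain ⟨h', hc', hs'⟩ := hq
  refine ⟨fun a k => h a k.unpair.1 && h' a k.unpair.2,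
    Primrec.and.to_comp.comp
      (hc.comp Computable.fst ((Computable.fst.comp Computable.unpair).comp Computable.snd))
      (hc'.comp Computable.fst ((Computable.snd.comp Computable.unpair).comp Computable.snd)),
    fun a => ?_⟩
  show p a ∧ q a ↔ _
  rw [hs, hs']
  constructor
  · rintro ⟨⟨k, hk⟩, ⟨l, hl⟩⟩
    exact ⟨Nat.pair k l, by simp [hk, hl]⟩
  · rintro ⟨k, hk⟩
    rw [Bool.and_eq_true] at hk
    exact ⟨⟨_, hk.1⟩, ⟨_, hk.2⟩⟩

theorem SD.ex {α : Type*} [Primcodable α] {p : α × ℕ → Prop} (hp : SD p) :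
    SD fun a => ∃ m, p (a, m) := by
  obtain ⟨h, hc, hs⟩ := hp
  refine ⟨fun a k => h (a, k.unpair.1) k.unpair.2,
    hc.comp (Computable.pair Computable.fst
        ((Computable.fst.comp Computable.unpair).comp Computable.snd))
      ((Computable.snd.comp Computable.unpair).comp Computable.snd), fun a => ?_⟩
  constructor
  · rintro ⟨m, hm⟩
    obtain ⟨k, hk⟩ := (hs _).1 hm
    exact ⟨Nat.pair m k, by simpa using hk⟩
  · rintro ⟨k, hk⟩
    exact ⟨_, (hs _).2 ⟨_, hk⟩⟩

theorem SD_WSet : SD fun x : ℕ × ℕ => x.2 ∈ WSet x.1 := by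
  refine ⟨fun x k =>
    (Nat.Partrec.Code.evaln k (Denumerable.ofNat Nat.Partrec.Code x.1) x.2).isSome, ?_, ?_⟩
  · have h1 : Primrec fun y : (ℕ × ℕ) × ℕ =>
        Nat.Partrec.Code.evaln y.2 (Denumerable.ofNat Nat.Partrec.Code y.1.1) y.1.2 :=
      Nat.Partrec.Code.primrec_evaln.comp
        (Primrec.pair (Primrec.pair Primrec.snd
          ((Primrec.ofNat _).comp (Primrec.fst.comp Primrec.fst)))
          (Primrec.snd.comp Primrec.fst))
    exact (Primrec.option_isSome.comp h1).to_comp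
  · rintro ⟨i, n⟩
    simp only [WSet, Set.mem_ofPred_eq, Part.dom_iff_mem, Option.isSome_iff_exists,
      Nat.Partrec.Code.evaln_complete]
    exact exists_comm

theorem SD.smn {p : ℕ × ℕ → Prop} (hp : SD p) :
    ∃ f : ℕ → ℕ, Computable f ∧ ∀ a n, n ∈ WSet (f a) ↔ p (a, n) := by
  obtain ⟨h, hc, hs⟩ := hp
  let o : ℕ → ℕ → Option ℕ := fun x k => cond (h x.unpair k) (some 0) none
  have ho : Computable₂ o :=
    Computable.cond (hc.comp (Computable.unpair.comp Computable.fst) Computable.snd)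
      (Computable.const _) (Computable.const _)
  have hF : Partrec fun x => Nat.rfindOpt (o x) := Partrec.rfindOpt ho
  obtain ⟨c, hcode⟩ := Nat.Partrec.Code.exists_code.1 (Partrec.nat_iff.1 hF)
  refine ⟨fun a => Encodable.encode (Nat.Partrec.Code.curry c a), ?_, fun a n => ?_⟩
  · exact (Primrec.encode.comp
      (Nat.Partrec.Code.primrec₂_curry.comp (Primrec.const c) Primrec.id)).to_comp
  · simp only [WSet, Set.mem_ofPred_eq, Denumerable.ofNat_encode, Nat.Partrec.Code.eval_curry,
      hcode, Nat.rfindOpt_dom, hs]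
    refine exists_congr fun k => ?_
    simp only [o, Nat.unpair_pair]
    cases h (a, n) k <;> simp

/-! ## Logic -/

theorem prv_iff.{u, v} {L : FirstOrder.Language.{u, v}} {U : L.Theory} {φ : L.Sentence} :
    Prv U φ ↔ ∀ M : Theory.ModelType.{u, v, max u v} U, M ⊨ φ :=
  Theory.models_sentence_iff

/-- Deduction theorem, one direction. -/
theorem prv_single {ψ φ : L.Sentence} (U : L.Theory) (h : Prv {ψ} φ) : Prv U (ψ ⟹ φ) := by
  rw [prv_iff]
  intro M
  rw [Sentence.realize_imp]
  intro hM
  have : (M : Type _) ⊨ ({ψ} : L.Theory) := by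
    rw [Theory.model_iff]
    rintro χ rfl
    exact hM
  exact Theory.ModelsBoundedFormula.realize_sentence h M

theorem Prv.cut {ρ : L.Sentence} {ψ φ : L.Sentence} (h1 : Prv {ρ} ψ) (h2 : Prv {ψ} φ) :
    Prv {ρ} φ :=
  Theory.models_of_models_theory (T' := ({ψ} : L.Theory))
    (by intro χ hχ; rw [Set.mem_singleton_iff] at hχ; rw [hχ]; exact h1) h2

theorem Prv.left {ρ : L.Theory} {ψ φ : L.Sentence} (h : Prv ρ (ψ ⊓ φ)) : Prv ρ ψ := by
  rw [prv_iff] at *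
  intro M
  exact ((Sentence.realize_inf M).1 (h M)).1

theorem Prv.right {ρ : L.Theory} {ψ φ : L.Sentence} (h : Prv ρ (ψ ⊓ φ)) : Prv ρ φ := by
  rw [prv_iff] at *
  intro M
  exact ((Sentence.realize_inf M).1 (h M)).2

theorem Ssub.finite {U V : L.Theory} (h : Ssub U V) {ψ : L.Sentence} (hψ : ψ ∈ V)
    (T : Finset L.Sentence) (hT : (T : L.Theory) ⊆ U) :
    ∃ ρ ∈ V, Prv {ρ} ψ ∧ ∀ φ ∈ T, Prv {ρ} φ := by
  classical
  induction T using Finset.induction_on with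
  | empty => exact ⟨ψ, hψ, Theory.models_sentence_of_mem rfl, by simp⟩
  | insert a T _ ih =>
    obtain ⟨ρ, hρ, h1, h2⟩ := ih (fun x hx => hT (by simp at hx ⊢; exact Or.inr hx))
    obtain ⟨σ, hσ, h3⟩ := h a (hT (by simp)) ρ hρ
    refine ⟨σ, hσ, h3.right.cut h1, fun φ hφ => ?_⟩
    rcases Finset.mem_insert.1 hφ with rfl | hφ
    · exact h3.left
    · exact h3.right.cut (h2 φ hφ)

/-- A mono-consistent `V` with `U ⋐ V` has only members consistent with `U`. -/
theorem Ssub.cons {U V : L.Theory} (h : Ssub U V) (hV : MonoConsistent V) {ψ : L.Sentence}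
    (hψ : ψ ∈ V) : ¬ Prv U (∼ψ) := by
  intro hp
  obtain ⟨T, hT, hp'⟩ := Theory.models_iff_finset_models.1 hp
  obtain ⟨ρ, hρ, h1, h2⟩ := h.finite hψ T hT
  have h3 : Prv {ρ} (∼ψ) := Theory.models_of_models_theory (T' := (T : L.Theory))
    (fun φ hφ => h2 φ hφ) hp'
  refine hV ρ hρ ?_
  rw [prv_iff] at *
  intro M
  exact absurd (h1 M) (Sentence.realize_not M |>.1 (h3 M))

theorem Prv.contra {U : L.Theory} {ψ φ : L.Sentence} (h1 : Prv U (ψ ⟹ φ)) (h2 : Prv U (∼φ)) :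
    Prv U (∼ψ) := by
  rw [prv_iff] at *
  intro M
  have a := h1 M
  have b := h2 M
  rw [Sentence.realize_imp] at a
  rw [Sentence.realize_not] at b ⊢
  exact fun c => b (a c)

theorem Prv.contra' {U : L.Theory} {ψ φ : L.Sentence} (h1 : Prv U (ψ ⟹ ∼φ)) (h2 : Prv U φ) :
    Prv U (∼ψ) := by
  rw [prv_iff] at *
  intro M
  have a := h1 M
  rw [Sentence.realize_imp, Sentence.realize_not] at a
  rw [Sentence.realize_not]
  exact fun c => a c (h2 M)

theorem Prv.incons {U : L.Theory} {φ : L.Sentence} (h1 : Prv U φ) (h2 : Prv U (∼φ)) :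
    Prv U ⊥ := by
  rw [prv_iff] at *
  intro M
  exact absurd (h1 M) (Sentence.realize_not M |>.1 (h2 M))

theorem Prv.dne {U : L.Theory} {φ : L.Sentence} (h2 : Prv U (∼(∼φ))) :
    Prv U φ := by
  rw [prv_iff] at *
  intro M
  have := h2 M
  rw [Sentence.realize_not, Sentence.realize_not, not_not] at this
  exact this

theorem prv_refl_imp (U : L.Theory) (φ : L.Sentence) : Prv U (φ ⟹ φ) :=
  prv_single U (Theory.models_sentence_of_mem rfl)

theorem prv_bot_single {U : L.Theory} {ρ : L.Sentence} (h : Prv {ρ} ⊥) : Prv U (∼ρ) :=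
  prv_single U h

theorem Prv.imp_inf {U : L.Theory} {ψ φ χ : L.Sentence} (h1 : Prv U (ψ ⟹ χ)) (h2 : φ ∈ U) :
    Prv U (ψ ⟹ (φ ⊓ χ)) := by
  have h3 : Prv U φ := Theory.models_sentence_of_mem h2
  rw [prv_iff] at *
  intro M
  have a := h1 M
  rw [Sentence.realize_imp] at a ⊢
  exact fun c => (Sentence.realize_inf M).2 ⟨h3 M, a c⟩

theorem mem_codes_iff (g : Numbering L) (S : Set L.Sentence) (n : ℕ) :
    n ∈ g.codes S ↔ g.equiv.symm n ∈ S := by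
  constructor
  · rintro ⟨φ, h, rfl⟩
    simpa using h
  · intro h
    exact ⟨_, h, by simp⟩

theorem mem_thy_iff (g : Numbering L) (i : ℕ) (φ : L.Sentence) :
    φ ∈ g.thy i ↔ g.equiv φ ∈ WSet i := by
  constructor
  · rintro ⟨n, h, rfl⟩
    simpa using h
  · intro h
    exact ⟨_, h, by simp⟩

theorem SD_prv (g : Numbering L) (U : L.Theory) (hU : g.CEThy U) :
    SD fun n : ℕ => Prv U (g.equiv.symm n) := by
  obtain ⟨i, hi⟩ := hU
  have h1 : g.thy i = U := by
    ext φ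
    rw [mem_thy_iff, ← hi, mem_codes_iff, Equiv.symm_apply_apply]
  have h2 : ∀ n, n ∈ WSet (g.thmIdx i) ↔ Prv U (g.equiv.symm n) := by
    intro n
    rw [g.thmIdx_spec, ← h1]
    exact mem_codes_iff g _ n
  have h3 := SD_WSet.comp (f := fun n : ℕ => (g.thmIdx i, n))
    (Computable.pair (Computable.const _) Computable.id)
  simpa only [h2] using h3

section
variable (g : Numbering L) (U : L.Theory)

/-- `{n | ∃ m ∈ W_i, U ⊢ m → n}` is semidecidable. -/
theorem SD_up (hU : g.CEThy U) : SD fun x : ℕ × ℕ =>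
    ∃ m, m ∈ WSet x.1 ∧ Prv U (g.equiv.symm m ⟹ g.equiv.symm x.2) := by
  have h1 : SD fun y : (ℕ × ℕ) × ℕ => y.2 ∈ WSet y.1.1 :=
    SD_WSet.comp (f := fun y : (ℕ × ℕ) × ℕ => (y.1.1, y.2))
      (Computable.pair (Computable.fst.comp Computable.fst) Computable.snd)
  have h2 := (SD_prv g U hU).comp (f := fun y : (ℕ × ℕ) × ℕ =>
      g.equiv (g.equiv.symm y.2 ⟹ g.equiv.symm y.1.2))
    (g.imp_comp.comp Computable.snd (Computable.snd.comp Computable.fst))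
  simp only [Equiv.symm_apply_apply] at h2
  exact (h1.and h2).ex

/-- `{n | ∃ m ∈ W_i, U ⊢ ¬m → n}` is semidecidable. -/
theorem SD_upneg (hU : g.CEThy U) : SD fun x : ℕ × ℕ =>
    ∃ m, m ∈ WSet x.1 ∧ Prv U (∼(g.equiv.symm m) ⟹ g.equiv.symm x.2) := by
  have h1 : SD fun y : (ℕ × ℕ) × ℕ => y.2 ∈ WSet y.1.1 :=
    SD_WSet.comp (f := fun y : (ℕ × ℕ) × ℕ => (y.1.1, y.2))
      (Computable.pair (Computable.fst.comp Computable.fst) Computable.snd)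
  have h2 := (SD_prv g U hU).comp (f := fun y : (ℕ × ℕ) × ℕ =>
      g.equiv (g.equiv.symm (g.equiv (∼(g.equiv.symm y.2))) ⟹ g.equiv.symm y.1.2))
    (g.imp_comp.comp (g.neg_comp.comp Computable.snd) (Computable.snd.comp Computable.fst))
  simp only [Equiv.symm_apply_apply] at h2
  exact (h1.and h2).ex

end

theorem forward (g : Numbering L) (U : L.Theory)
    (hU : g.CEThy U) (hcon : Consistent U) (X : Set L.Sentence) (H : EffXInseparable g U X) :
      ∃ Ψ : ℕ →. ℕ, Partrec Ψ ∧ ∀ j,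
        Ssub U (g.thy j) → MonoConsistent (g.thy j) →
        ∃ n ∈ Ψ j, ∃ φ : L.Sentence, g.code φ = n ∧ φ ∈ X ∧
          φ ∉ MThms (g.thy j) ∪ MRefut (g.thy j) := by
  obtain ⟨Φ, hΦ, hs⟩ := H
  have hp : SD fun x : ℕ × ℕ =>
      (∃ m, m ∈ WSet x.1 ∧ Prv U (g.equiv.symm m ⟹ g.equiv.symm x.2)) ∨
        Prv U (g.equiv.symm x.2) :=
    (SD_up g U hU).or ((SD_prv g U hU).comp Computable.snd)
  have hq := hp.comp (f := fun x : ℕ × ℕ => (x.1, g.equiv (∼(g.equiv.symm x.2))))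
    (Computable.pair Computable.fst (g.neg_comp.comp Computable.snd))
  simp only [Equiv.symm_apply_apply] at hq
  obtain ⟨f, hf, hfs⟩ := hp.smn
  obtain ⟨f', hf', hfs'⟩ := hq.smn
  refine ⟨fun j => Φ (f j) (f' j), hΦ.comp hf hf', fun j hsub hmono => ?_⟩
  have key : ∀ m, m ∈ WSet j → ¬ Prv U (∼(g.equiv.symm m)) := fun m hm =>
    hsub.cons hmono (by rw [mem_thy_iff]; simpa using hm)
  obtain ⟨n, hn, hnX, hnW⟩ := hs (f j) (f' j) (by
    refine ⟨fun n hn => ?_, fun n hn => ?_, ?_, ?_⟩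
    · rw [mem_codes_iff] at hn
      exact (hfs j n).2 (Or.inr hn)
    · rw [mem_codes_iff] at hn
      exact (hfs' j n).2 (Or.inr hn)
    · rw [Set.eq_empty_iff_forall_notMem]
      rintro n ⟨h1, h2⟩
      rw [mem_codes_iff] at h2
      rcases (hfs j n).1 h1 with ⟨m, hm, h3⟩ | h3
      · exact key m hm (h3.contra h2)
      · exact hcon (h3.incons h2)
    · rw [Set.eq_empty_iff_forall_notMem]
      rintro n ⟨h1, h2⟩
      rw [mem_codes_iff] at h2
      rcases (hfs' j n).1 h1 with ⟨m, hm, h3⟩ | h3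
      · exact key m hm (h3.contra' h2)
      · exact hcon (Prv.incons h2 h3))
  refine ⟨n, hn, g.equiv.symm n, by simp [Numbering.code], (mem_codes_iff g X n).1 hnX, ?_⟩
  rintro (⟨ψ, hψ, h⟩ | ⟨ψ, hψ, h⟩)
  · exact hnW (Or.inl ((hfs j n).2 (Or.inl ⟨g.equiv ψ, (mem_thy_iff g j ψ).1 hψ,
      by simpa using prv_single U h⟩)))
  · exact hnW (Or.inr ((hfs' j n).2 (Or.inl ⟨g.equiv ψ, (mem_thy_iff g j ψ).1 hψ,
      by simpa using prv_single U h⟩)))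

theorem backward (g : Numbering L) (U : L.Theory)
    (hU : g.CEThy U) (X : Set L.Sentence)
    (H : ∃ Ψ : ℕ →. ℕ, Partrec Ψ ∧ ∀ j,
        Ssub U (g.thy j) → MonoConsistent (g.thy j) →
        ∃ n ∈ Ψ j, ∃ φ : L.Sentence, g.code φ = n ∧ φ ∈ X ∧
          φ ∉ MThms (g.thy j) ∪ MRefut (g.thy j)) : EffXInseparable g U X := by
  obtain ⟨Ψ, hΨ, hs⟩ := H
  have hp := ((SD_up g U hU).comp (f := fun x : ℕ × ℕ => (x.1.unpair.1, x.2))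
      (Computable.pair ((Computable.fst.comp Computable.unpair).comp Computable.fst)
        Computable.snd)).or
    ((SD_upneg g U hU).comp (f := fun x : ℕ × ℕ => (x.1.unpair.2, x.2))
      (Computable.pair ((Computable.snd.comp Computable.unpair).comp Computable.fst)
        Computable.snd))
  obtain ⟨f, hf, hfs⟩ := hp.smn
  refine ⟨fun i j => Ψ (f (Nat.pair i j)),
    hΨ.comp (hf.comp (Primrec₂.natPair.to_comp.comp Computable.fst Computable.snd)),
    fun i j hw => ?_⟩
  obtain ⟨-, -, h1, h2⟩ := hw
  rw [Set.eq_empty_iff_forall_notMem] at h1 h2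
  have hmem : ∀ θ : L.Sentence, θ ∈ g.thy (f (Nat.pair i j)) ↔
      (∃ m, m ∈ WSet i ∧ Prv U (g.equiv.symm m ⟹ θ)) ∨
      (∃ m, m ∈ WSet j ∧ Prv U (∼(g.equiv.symm m) ⟹ θ)) := by
    intro θ
    rw [mem_thy_iff, hfs]
    simp
  obtain ⟨n, hn, φ, rfl, hX, hφ⟩ := hs (f (Nat.pair i j)) (by
    intro φ hφ ψ hψ
    refine ⟨φ ⊓ ψ, ?_, Theory.models_sentence_of_mem rfl⟩
    rw [hmem] at hψ ⊢
    rcases hψ with ⟨m, hm, h⟩ | ⟨m, hm, h⟩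
    · exact Or.inl ⟨m, hm, h.imp_inf hφ⟩
    · exact Or.inr ⟨m, hm, h.imp_inf hφ⟩) (by
    intro ψ hψ hbot
    have hbot' : Prv U (∼ψ) := prv_bot_single hbot
    rw [hmem] at hψ
    rcases hψ with ⟨m, hm, h⟩ | ⟨m, hm, h⟩
    · exact h1 m ⟨hm, (mem_codes_iff g _ m).2 (h.contra hbot')⟩
    · exact h2 m ⟨hm, (mem_codes_iff g _ m).2 (h.contra hbot').dne⟩)
  refine ⟨_, hn, ⟨φ, hX, rfl⟩, ?_⟩
  rintro (h | h)
  · refine hφ (Or.inl ⟨φ, (hmem φ).2 (Or.inl ⟨g.equiv φ, h, ?_⟩),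
      Theory.models_sentence_of_mem rfl⟩)
    simpa using prv_refl_imp U φ
  · refine hφ (Or.inr ⟨∼φ, (hmem _).2 (Or.inr ⟨g.equiv φ, h, ?_⟩),
      Theory.models_sentence_of_mem rfl⟩)
    simpa using prv_refl_imp U (∼φ)

/-- A consistent c.e. theory `U` is effectively `X`-inseparable
iff it is effectively `⋐`-essentially `X`-m-incomplete: some partial computable
`Ψ` produces, for every `j` with `U ⋐ W j` and `W j` mono-consistent, a sentence
in `X` outside `(W j)_m ∪ (W j)_n`. -/
theorem statement7 {L : FirstOrder.Language} (g : Numbering L) (U : L.Theory)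
    (hU : g.CEThy U) (hcon : Consistent U) (X : Set L.Sentence) :
    EffXInseparable g U X ↔
      ∃ Ψ : ℕ →. ℕ, Partrec Ψ ∧ ∀ j,
        Ssub U (g.thy j) → MonoConsistent (g.thy j) →
        ∃ n ∈ Ψ j, ∃ φ : L.Sentence, g.code φ = n ∧ φ ∈ X ∧
          φ ∉ MThms (g.thy j) ∪ MRefut (g.thy j) := by
  exact ⟨forward g U hU hcon X, backward g U hU X⟩

end PourEl
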